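/- Let C ⊆ ℝ³ be a convex region with nonempty interior whose algebraic boundary is defined by a cubic polynomial f ∈ ℝ[x,y,z] such that the projective surface {f^h = 0} ⊂ ℙ³(ℂ) is smooth. Then there do not exist real symmetric 4×4 matrices A₀, A₁, A₂, A₃ with C = {(x,y,z) ∈ ℝ³ : A₀ + A₁x + A₂y + A₃z ⪰ 0}. -/

import Mathlib

open MvPolynomial

/-!
Adding to `A₀` the orthogonal projection onto the common kernel at an interior point of `C` does not
change `C`, so the determinant of the pencil may be assumed nonzero. It vanishes on the boundary of
`C`, hence on the real zeros of the irreducible cubic `F`; having odd degree, `F` has enough real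
zeros to divide the determinant, which is therefore `L * F` for a linear form `L`. After
normalization the symmetric pencil is `L • 1 + N p`, where `N` is a linear space of singular
symmetric operators, generically of corank one because `L` does not divide `F`. Such a space on a
four-dimensional space either annihilates a common vector or maps a common plane into a line
orthogonal to it. In the first case `F` is the determinant of a symmetric `3 × 3` matrix of linear
forms, in the second `F = P * Q - L * d ^ 2`, and both surfaces have complex singular points.
-/

section CommonZeros

variable {σ K : Type*} [Field K]

theorem height_vanishingIdeal_singleton (x y : σ → K) :
    (vanishingIdeal K {x}).height = (vanishingIdeal K {y}).height := by
  let translate (z : σ → K) : MvPolynomial σ K →ₐ[K] MvPolynomial σ K :=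
    aeval fun i ↦ X i + C (z i)
  let e : MvPolynomial σ K ≃ₐ[K] MvPolynomial σ K :=
    AlgEquiv.ofAlgHom (translate (x - y)) (translate (y - x))
      (algHom_ext fun i ↦ by simp [translate]; ring) (algHom_ext fun i ↦ by simp [translate]; ring)
  have eval_translate (p : MvPolynomial σ K) : aeval y (e p) = aeval x p := by
    have : (aeval y).comp (translate (x - y)) = aeval (R := K) x := by ext i; simp [translate]
    exact DFunLike.congr_fun this p
  have comap_eq : vanishingIdeal K {x} = (vanishingIdeal K {y}).comap e.toRingEquiv := by
    ext p
    simp only [Ideal.mem_comap, mem_vanishingIdeal_singleton_iff]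
    exact (eval_translate p).symm ▸ Iff.rfl
  rw [comap_eq, RingEquiv.height_comap]

theorem exists_ne_zero_forall_eval_eq_zero [IsAlgClosed K] [Fintype σ]
    (s : Finset (MvPolynomial σ K)) (hs : ∀ f ∈ s, eval 0 f = 0)
    (hcard : s.card < Fintype.card σ) :
    ∃ p : σ → K, p ≠ 0 ∧ ∀ f ∈ s, eval p f = 0 := by
  by_contra! hzero
  have zeroLocus_eq : zeroLocus K (Ideal.span (s : Set (MvPolynomial σ K))) = {0} := by
    ext p
    rw [zeroLocus_span, Set.mem_singleton_iff]
    refine ⟨fun hp ↦ by_contra fun hne ↦ ?_, ?_⟩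
    · obtain ⟨f, hf, hpf⟩ := hzero p hne
      exact hpf (hp f hf)
    · rintro rfl f hf
      exact hs f hf
  have mem_minimalPrimes : vanishingIdeal K {(0 : σ → K)} ∈
      (Ideal.span (s : Set (MvPolynomial σ K))).minimalPrimes := by
    rw [← Ideal.radical_minimalPrimes, ← vanishingIdeal_zeroLocus_eq_radical (K := K),
      zeroLocus_eq, Ideal.minimalPrimes_eq_subsingleton_self]
    rfl
  have dim_le : ringKrullDim (MvPolynomial σ K) ≤ s.card := by
    refine (ringKrullDim_le_iff_isMaximal_height_le _).mpr fun M hM ↦ ?_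
    obtain ⟨x, rfl⟩ := isMaximal_iff_eq_vanishingIdeal_singleton.mp hM
    rw [height_vanishingIdeal_singleton x 0]
    exact_mod_cast Ideal.height_le_card_of_mem_minimalPrimes_span_finset mem_minimalPrimes
  rw [ringKrullDim_of_isNoetherianRing, ringKrullDim_eq_zero_of_field, zero_add,
    Nat.card_eq_fintype_card] at dim_le
  exact hcard.not_ge (by exact_mod_cast dim_le)

variable {k : Type*} [Field k] [Algebra k K] [IsAlgClosed K] [Fintype σ]

theorem exists_ne_zero_forall_aeval_eq_zero {ι : Type*} [Fintype ι] (f : ι → MvPolynomial σ k)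
    (hf : ∀ i, constantCoeff (f i) = 0) (hcard : Fintype.card ι < Fintype.card σ) :
    ∃ p : σ → K, p ≠ 0 ∧ ∀ i, aeval p (f i) = 0 := by
  classical
  obtain ⟨p, hp, hpf⟩ := exists_ne_zero_forall_eval_eq_zero
    (Finset.univ.image fun i ↦ map (algebraMap k K) (f i))
    (by simp [hf]) (Finset.card_image_le.trans_lt hcard)
  refine ⟨p, hp, fun i ↦ ?_⟩
  simpa [eval_map, aeval_def] using hpf _ (Finset.mem_image_of_mem _ (Finset.mem_univ i))

end CommonZeros

section HomogeneousFactors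

variable {σ R : Type*} [CommRing R]

/-- The algebra map `X i ↦ t X i` into polynomials in `t`, whose `t`-coefficients are the
homogeneous components of its argument. -/
noncomputable def componentsHom (σ R : Type*) [CommRing R] :
    MvPolynomial σ R →ₐ[R] Polynomial (MvPolynomial σ R) :=
  aeval fun i ↦ Polynomial.C (X i) * Polynomial.X

theorem componentsHom_monomial (d : σ →₀ ℕ) (r : R) :
    componentsHom σ R (monomial d r) = Polynomial.monomial d.degree (monomial d r) := by
  rw [componentsHom, aeval_monomial, ← Polynomial.C_mul_X_pow_eq_monomial, monomial_eq,
    Finsupp.degree_apply]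
  simp only [Finsupp.prod, mul_pow, Finset.prod_mul_distrib, Finset.prod_pow_eq_pow_sum, map_mul,
    map_prod, map_pow, mul_assoc]
  rfl

theorem coeff_componentsHom (P : MvPolynomial σ R) (n : ℕ) :
    (componentsHom σ R P).coeff n = homogeneousComponent n P := by
  induction P using MvPolynomial.induction_on' with
  | monomial d r =>
    rw [componentsHom_monomial, Polynomial.coeff_monomial,
      homogeneousComponent_of_mem (isHomogeneous_monomial r rfl)]
    simp only [eq_comm]
  | add P Q hP hQ => rw [map_add, Polynomial.coeff_add, hP, hQ, map_add]

theorem componentsHom_injective : Function.Injective (componentsHom σ R) := by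
  intro P Q h
  ext d
  have component_eq := congrArg (Polynomial.coeff · d.degree) h
  simp only [coeff_componentsHom] at component_eq
  simpa [coeff_homogeneousComponent] using congrArg (coeff d) component_eq

theorem isHomogeneous_of_natDegree_le_natTrailingDegree {P : MvPolynomial σ R}
    (h : (componentsHom σ R P).natDegree ≤ (componentsHom σ R P).natTrailingDegree) :
    P.IsHomogeneous (componentsHom σ R P).natDegree := by
  set n := (componentsHom σ R P).natDegree
  have map_eq : componentsHom σ R P = componentsHom σ R (homogeneousComponent n P) := by
    ext1 k
    rw [coeff_componentsHom (homogeneousComponent n P),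
      homogeneousComponent_of_mem (homogeneousComponent_isHomogeneous n P)]
    split_ifs with hk
    · rw [hk, coeff_componentsHom]
    · rcases lt_or_gt_of_ne hk with hlt | hgt
      · exact Polynomial.coeff_eq_zero_of_lt_natTrailingDegree (hlt.trans_le h)
      · exact Polynomial.coeff_eq_zero_of_natDegree_lt hgt
  rw [componentsHom_injective map_eq]
  exact homogeneousComponent_isHomogeneous n P

/-- In a domain both the degree and the order in `t` are additive, so neither factor can spread
over several degrees when the product does not. -/
theorem exists_isHomogeneous_of_mul [IsDomain R] {P Q : MvPolynomial σ R} {n : ℕ}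
    (hPQ : (P * Q).IsHomogeneous n) (hne : P * Q ≠ 0) :
    ∃ i j, i + j = n ∧ P.IsHomogeneous i ∧ Q.IsHomogeneous j := by
  have componentsHom_mul :
      componentsHom σ R P * componentsHom σ R Q = Polynomial.monomial n (P * Q) := by
    rw [← map_mul]
    ext1 k
    rw [coeff_componentsHom, homogeneousComponent_of_mem hPQ, Polynomial.coeff_monomial]
    simp only [eq_comm]
  have hP : componentsHom σ R P ≠ 0 :=
    (map_ne_zero_iff _ componentsHom_injective).mpr (left_ne_zero_of_mul hne)
  have hQ : componentsHom σ R Q ≠ 0 :=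
    (map_ne_zero_iff _ componentsHom_injective).mpr (right_ne_zero_of_mul hne)
  have degree_add := congrArg Polynomial.natDegree componentsHom_mul
  have order_add := congrArg Polynomial.natTrailingDegree componentsHom_mul
  rw [Polynomial.natDegree_mul hP hQ, Polynomial.natDegree_monomial_eq n hne] at degree_add
  rw [Polynomial.natTrailingDegree_mul hP hQ, Polynomial.natTrailingDegree_monomial hne]
    at order_add
  have order_le_P := (componentsHom σ R P).natTrailingDegree_le_natDegree
  have order_le_Q := (componentsHom σ R Q).natTrailingDegree_le_natDegree
  exact ⟨_, _, degree_add,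
    isHomogeneous_of_natDegree_le_natTrailingDegree (by lia),
    isHomogeneous_of_natDegree_le_natTrailingDegree (by lia)⟩

end HomogeneousFactors

section Divisibility

open Filter

theorem exists_isRoot_of_odd_natDegree {p : Polynomial ℝ} (hp : Odd p.natDegree) :
    ∃ x, p.IsRoot x := by
  wlog hlead : 0 < p.leadingCoeff generalizing p
  · have hp0 : p ≠ 0 := by rintro rfl; simp at hp
    have hneg : 0 < (-p).leadingCoeff := by
      rw [Polynomial.leadingCoeff_neg, neg_pos]
      exact (not_lt.mp hlead).lt_of_ne (Polynomial.leadingCoeff_ne_zero.mpr hp0)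
    obtain ⟨x, hx⟩ := this (by rwa [Polynomial.natDegree_neg]) hneg
    exact ⟨x, by simpa using hx⟩
  have tendsto_atTop_of_pos {q : Polynomial ℝ} (hdeg : Odd q.natDegree) (hq : 0 < q.leadingCoeff) :
      Tendsto (fun x ↦ q.eval x) atTop atTop :=
    q.tendsto_atTop_of_leadingCoeff_nonneg (Polynomial.natDegree_pos_iff_degree_pos.mp hdeg.pos)
      hq.le
  have natDegree_reflect : (-p.comp (-Polynomial.X)).natDegree = p.natDegree := by
    simp [Polynomial.natDegree_comp]
  have leadingCoeff_reflect : (-p.comp (-Polynomial.X)).leadingCoeff = p.leadingCoeff := by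
    simp [hp.neg_one_pow]
  have tendsto_reflect : Tendsto (fun x ↦ p.eval (-x)) atTop atBot := by
    have := tendsto_atTop_of_pos (natDegree_reflect ▸ hp) (leadingCoeff_reflect ▸ hlead)
    simpa [Function.comp_def] using tendsto_neg_atTop_atBot.comp this
  have tendsto_atBot : Tendsto (fun x ↦ p.eval x) atBot atBot := by
    simpa [Function.comp_def] using tendsto_reflect.comp tendsto_neg_atBot_atTop
  exact p.continuous.surjective (tendsto_atTop_of_pos hp hlead) tendsto_atBot 0

/-- In the domain `R[X] ⧸ (P)`, which is integral over `R`, every nonzero ideal meets `R`. -/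
theorem exists_C_mem_span_pair {R : Type*} [CommRing R] [IsDomain R] {P E : Polynomial R}
    (hmonic : P.Monic) (hprime : Prime P) (hE : ¬P ∣ E) :
    ∃ h ≠ 0, Polynomial.C h ∈ Ideal.span {P, E} := by
  have : IsDomain (AdjoinRoot P) := AdjoinRoot.isDomain_of_prime hprime
  have : Module.Finite R (AdjoinRoot P) := hmonic.finite_adjoinRoot
  have hE' : AdjoinRoot.mk P E ≠ 0 := by rwa [Ne, AdjoinRoot.mk_eq_zero]
  have comap_ne_bot : (Ideal.span {AdjoinRoot.mk P E}).comap (algebraMap R (AdjoinRoot P)) ≠ ⊥ :=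
    Ideal.comap_ne_bot_of_integral_mem hE' (Ideal.mem_span_singleton_self _)
      (Algebra.IsIntegral.isIntegral _)
  obtain ⟨h, h_mem, hh⟩ := Submodule.exists_mem_ne_zero_of_ne_bot comap_ne_bot
  obtain ⟨g, hg⟩ := Ideal.mem_span_singleton'.mp (Ideal.mem_comap.mp h_mem)
  obtain ⟨G, rfl⟩ := AdjoinRoot.mk_surjective g
  rw [AdjoinRoot.algebraMap_eq, ← AdjoinRoot.mk_C, ← map_mul, AdjoinRoot.mk_eq_mk] at hg
  obtain ⟨B, hB⟩ := hg
  exact ⟨h, hh, Ideal.mem_span_pair.mpr ⟨-B, G, by linear_combination hB⟩⟩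

variable {σ R : Type*} [CommRing R]

/-- The substitution `y ↦ y + t e`, restricting polynomials to the lines of direction `e`. -/
noncomputable def lineHom (e : σ → R) : MvPolynomial σ R →ₐ[R] Polynomial (MvPolynomial σ R) :=
  aeval fun i ↦ Polynomial.C (X i) + Polynomial.C (C (e i)) * Polynomial.X

theorem eval_map_lineHom (e y : σ → R) (t : R) (P : MvPolynomial σ R) :
    ((lineHom e P).map (eval y)).eval t = eval (y + t • e) P := by
  have hom_eq : ((Polynomial.evalRingHom t).comp (Polynomial.mapRingHom (eval y))).comp
      (lineHom e).toRingHom = eval (y + t • e) := by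
    ext i
    · simp [lineHom]
    · simp [lineHom, mul_comm t]
  exact DFunLike.congr_fun hom_eq P

theorem lineHom_dvd_lineHom_iff (e : σ → R) {P Q : MvPolynomial σ R} :
    lineHom e P ∣ lineHom e Q ↔ P ∣ Q := by
  have eval_zero (P : MvPolynomial σ R) : (lineHom e P).eval 0 = P := by
    have hom_eq : (Polynomial.evalRingHom 0).comp (lineHom e).toRingHom = RingHom.id _ := by
      ext <;> simp [lineHom]
    exact DFunLike.congr_fun hom_eq P
  refine ⟨fun h ↦ ?_, map_dvd (lineHom e)⟩
  simpa only [Polynomial.coe_evalRingHom, eval_zero] using map_dvd (Polynomial.evalRingHom 0) h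

theorem isHomogeneous_optionEquivLeft_symm_lineHom (e : σ → R) {P : MvPolynomial σ R} {n : ℕ}
    (hP : P.IsHomogeneous n) : ((optionEquivLeft R σ).symm (lineHom e P)).IsHomogeneous n := by
  have hom_eq : ((optionEquivLeft R σ).symm : _ →ₐ[R] _).comp (lineHom e) =
      aeval (fun i ↦ X (some i) + C (e i) * X none) := by
    ext1 i; simp [lineHom]
  rw [show (optionEquivLeft R σ).symm (lineHom e P) = _ from DFunLike.congr_fun hom_eq P]
  simpa using hP.aeval _ fun i ↦ (isHomogeneous_X R _).add (isHomogeneous_C_mul_X _ _)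

theorem natDegree_lineHom_le (e : σ → R) {P : MvPolynomial σ R} {n : ℕ} (hP : P.IsHomogeneous n) :
    (lineHom e P).natDegree ≤ n := by
  have natDegree_eq := natDegree_optionEquivLeft R ((optionEquivLeft R σ).symm (lineHom e P))
  rw [AlgEquiv.apply_symm_apply] at natDegree_eq
  exact natDegree_eq.le.trans ((degreeOf_le_totalDegree _ _).trans
    (isHomogeneous_optionEquivLeft_symm_lineHom e hP).totalDegree_le)

theorem coeff_lineHom [Finite σ] (e : σ → R) {P : MvPolynomial σ R} {n : ℕ}
    (hP : P.IsHomogeneous n) : (lineHom e P).coeff n = C (eval e P) := by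
  obtain ⟨r, hr⟩ : ∃ r, (lineHom e P).coeff n = C r :=
    ⟨_, totalDegree_eq_zero_iff_eq_C.mp <| (totalDegree_zero_iff_isHomogeneous _).mpr <|
      IsHomogeneous.coeff_isHomogeneous_of_optionEquivLeft_symm
        (isHomogeneous_optionEquivLeft_symm_lineHom e hP) n 0 (add_zero n)⟩
  have map_eval_zero : (lineHom e P).map (eval 0) = (componentsHom σ R P).map (eval e) := by
    have hom_eq : (Polynomial.mapRingHom (eval 0)).comp (lineHom e).toRingHom =
        (Polynomial.mapRingHom (eval e)).comp (componentsHom σ R).toRingHom := by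
      ext <;> simp [lineHom, componentsHom]
    exact DFunLike.congr_fun hom_eq P
  have coeff_eq := congrArg (Polynomial.coeff · n) map_eval_zero
  simp only [Polynomial.coeff_map, coeff_componentsHom, hr, eval_C,
    homogeneousComponent_of_mem hP, if_true] at coeff_eq
  rw [hr, coeff_eq]

theorem prime_lineHom (e : σ → R) {P : MvPolynomial σ R} (hP : Prime P) : Prime (lineHom e P) := by
  let shear (v : σ → R) : Polynomial (MvPolynomial σ R) →+* Polynomial (MvPolynomial σ R) :=
    Polynomial.eval₂RingHom (lineHom v).toRingHom Polynomial.X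
  have shear_comp (v w : σ → R) (hvw : v + w = 0) : (shear v).comp (shear w) = RingHom.id _ := by
    have cancel (i : σ) : C (v i) + C (w i) = (0 : MvPolynomial σ R) := by
      rw [← C_add, ← Pi.add_apply, hvw, Pi.zero_apply, C_0]
    ext : 2
    · ext; simp [shear, lineHom]
    · rename_i i
      simp [shear, lineHom, add_assoc, ← add_mul, ← Polynomial.C_add, cancel]
    · simp [shear]
  let shearEquiv : Polynomial (MvPolynomial σ R) ≃+* Polynomial (MvPolynomial σ R) :=
    RingEquiv.ofRingHom (shear e) (shear (-e)) (shear_comp _ _ (add_neg_cancel e))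
      (shear_comp _ _ (neg_add_cancel e))
  have map_C : shearEquiv (Polynomial.C P) = lineHom e P := by simp [shearEquiv, shear]
  rw [← map_C, MulEquiv.prime_iff, Polynomial.prime_C_iff]
  exact hP

/-- A polynomial in the variables transverse to `e` obtained by eliminating the coordinate along
`e` cannot vanish identically, while over each point the odd degree provides a real zero. -/
theorem dvd_of_forall_eval_eq_zero {σ : Type*} [Finite σ] {F D : MvPolynomial σ ℝ} {n : ℕ}
    (hF : F.IsHomogeneous n) (hn : Odd n) (hirr : Irreducible F)
    (hD : ∀ p, eval p F = 0 → eval p D = 0) : F ∣ D := by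
  obtain ⟨e, he⟩ : ∃ e, eval e F ≠ 0 := by
    by_contra! h
    exact hirr.ne_zero (MvPolynomial.funext fun p ↦ by rw [h, map_zero])
  wlog hFe : eval e F = 1 generalizing F
  · have associated : Associated (C (eval e F)⁻¹ * F) F :=
      associated_unit_mul_left _ _ ((isUnit_iff_ne_zero.mpr (inv_ne_zero he)).map C)
    rw [← associated.dvd_iff_dvd_left]
    refine this (hF.C_mul _) (associated.irreducible_iff.mpr hirr) (fun p hp ↦ hD p ?_) ?_ ?_
    · simpa [he] using hp
    all_goals simp [he]
  have coeff_eq : (lineHom e F).coeff n = 1 := by rw [coeff_lineHom e hF, hFe, C_1]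
  have monic : (lineHom e F).Monic :=
    Polynomial.monic_of_natDegree_le_of_coeff_eq_one n (natDegree_lineHom_le e hF) coeff_eq
  have natDegree_eq : (lineHom e F).natDegree = n :=
    Polynomial.natDegree_eq_of_le_of_coeff_ne_zero (natDegree_lineHom_le e hF)
      (coeff_eq ▸ one_ne_zero)
  by_contra hdvd
  obtain ⟨h, h_ne, hh⟩ := exists_C_mem_span_pair monic (prime_lineHom e hirr.prime)
    ((lineHom_dvd_lineHom_iff e).not.mpr hdvd)
  obtain ⟨A, B, hAB⟩ := Ideal.mem_span_pair.mp hh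
  refine h_ne (MvPolynomial.funext fun y ↦ ?_)
  obtain ⟨t, ht⟩ : ∃ t, ((lineHom e F).map (eval y)).IsRoot t :=
    exists_isRoot_of_odd_natDegree (by rwa [monic.natDegree_map, natDegree_eq])
  rw [Polynomial.IsRoot, eval_map_lineHom] at ht
  have eval_eq := congrArg (fun P ↦ (Polynomial.map (eval y) P).eval t) hAB
  simp only [Polynomial.map_add, Polynomial.map_mul, Polynomial.eval_add, Polynomial.eval_mul,
    eval_map_lineHom, ht, hD _ ht, mul_zero, add_zero, Polynomial.map_C, Polynomial.eval_C]
    at eval_eq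
  rw [map_zero, eval_eq]

end Divisibility

section SingularZeros

variable {σ k : Type*} [Field k]

/-- For homogeneous `F`: the projective hypersurface `F = 0` has a singular point over `K`. -/
def HasSingularZero (K : Type*) [Field K] [Algebra k K] (F : MvPolynomial σ k) : Prop :=
  ∃ p : σ → K, p ≠ 0 ∧ aeval p F = 0 ∧ ∀ i, aeval p (pderiv i F) = 0

variable {K : Type*} [Field K] [Algebra k K]

theorem HasSingularZero.of_C_mul {c : k} (hc : c ≠ 0) {F : MvPolynomial σ k}
    (h : HasSingularZero K (C c * F)) : HasSingularZero K F := by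
  simpa [HasSingularZero, pderiv_C_mul, Algebra.smul_def, hc] using h

theorem hasSingularZero_of_mem_sq_vanishingIdeal {p : σ → K} (hp : p ≠ 0) {F : MvPolynomial σ k}
    (hF : F ∈ vanishingIdeal k {p} ^ 2) : HasSingularZero K F := by
  refine ⟨p, hp, (mem_vanishingIdeal_singleton_iff p F).mp (Ideal.pow_le_self two_ne_zero hF),
    fun i ↦ ?_⟩
  rw [pow_two] at hF
  induction hF using Submodule.mul_induction_on' with
  | mem_mul_mem f hf g hg =>
    rw [mem_vanishingIdeal_singleton_iff] at hf hg
    simp [hf, hg]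
  | add f _ g _ hf hg => rw [map_add, map_add, hf, hg, add_zero]

variable [IsAlgClosed K] [Fintype σ]

variable (K) in
theorem hasSingularZero_mul (hσ : 3 ≤ Fintype.card σ) {P Q : MvPolynomial σ k}
    (hP : constantCoeff P = 0) (hQ : constantCoeff Q = 0) : HasSingularZero K (P * Q) := by
  obtain ⟨p, hp, hpPQ⟩ := exists_ne_zero_forall_aeval_eq_zero (K := K) ![P, Q]
    (by simp [Fin.forall_fin_two, hP, hQ]) (by rw [Fintype.card_fin]; lia)
  refine hasSingularZero_of_mem_sq_vanishingIdeal hp (pow_two (vanishingIdeal k {p}) ▸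
    Ideal.mul_mem_mul ?_ ?_) <;> rw [mem_vanishingIdeal_singleton_iff]
  exacts [hpPQ 0, hpPQ 1]

theorem irreducible_of_not_hasSingularZero (hσ : 3 ≤ Fintype.card σ) {F : MvPolynomial σ k} {n : ℕ}
    (hF : F.IsHomogeneous n) (hn : n ≠ 0) (hsmooth : ¬HasSingularZero K F) : Irreducible F := by
  have constantCoeff_eq_zero {P : MvPolynomial σ k} {i : ℕ} (hP : P.IsHomogeneous i) (hi : i ≠ 0) :
      constantCoeff P = 0 := hP.coeff_eq_zero (by simpa using hi.symm)
  have ne_zero : F ≠ 0 := by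
    rintro rfl
    exact hsmooth (by simpa using hasSingularZero_mul K hσ (map_zero constantCoeff) (map_zero _))
  refine irreducible_iff.mpr ⟨fun hunit ↦ ?_, fun P Q hPQ ↦ ?_⟩
  · simpa [constantCoeff_eq_zero hF hn] using hunit.map constantCoeff
  subst hPQ
  have isUnit_of_isHomogeneous_zero {P : MvPolynomial σ k} (hP : P.IsHomogeneous 0) (hP0 : P ≠ 0) :
      IsUnit P := by
    rw [totalDegree_eq_zero_iff_eq_C.mp ((totalDegree_zero_iff_isHomogeneous _).mpr hP)] at hP0 ⊢
    exact (isUnit_iff_ne_zero.mpr (by simpa using hP0)).map C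
  obtain ⟨i, j, hij, hP, hQ⟩ := exists_isHomogeneous_of_mul hF ne_zero
  by_contra! hunit
  have hi : i ≠ 0 := by
    rintro rfl
    exact hunit.1 (isUnit_of_isHomogeneous_zero hP (left_ne_zero_of_mul ne_zero))
  have hj : j ≠ 0 := by
    rintro rfl
    exact hunit.2 (isUnit_of_isHomogeneous_zero hQ (right_ne_zero_of_mul ne_zero))
  exact hsmooth
    (hasSingularZero_mul K hσ (constantCoeff_eq_zero hP hi) (constantCoeff_eq_zero hQ hj))

/-- A linear space of symmetric `3 × 3` matrices of dimension at least four meets the Veronese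
surface of the matrices `v vᵀ`, along which the determinant is singular. -/
theorem hasSingularZero_det_fin_three (hσ : 4 ≤ Fintype.card σ)
    {N : Matrix (Fin 3) (Fin 3) (MvPolynomial σ k)} (hN : N.IsSymm)
    (hlin : ∀ i j, constantCoeff (N i j) = 0) : HasSingularZero K N.det := by
  obtain ⟨q, hq, hqN⟩ := exists_ne_zero_forall_aeval_eq_zero (K := K)
    (fun ij : {ij : Fin 3 × Fin 3 // ij.1 ≤ ij.2} ↦ rename Sum.inl (N ij.1.1 ij.1.2) -
      X (Sum.inr ij.1.1 : σ ⊕ Fin 3) * X (Sum.inr ij.1.2))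
    (fun ij ↦ by simp [hlin])
    (by
      have card_eq : Fintype.card {ij : Fin 3 × Fin 3 // ij.1 ≤ ij.2} = 6 := by decide
      rw [Fintype.card_sum, Fintype.card_fin, card_eq]
      lia)
  set p : σ → K := q ∘ Sum.inl
  set v : Fin 3 → K := q ∘ Sum.inr
  have upper {i j : Fin 3} (hij : i ≤ j) : aeval p (N i j) = v i * v j := by
    simpa [aeval_rename, sub_eq_zero, p, v] using hqN ⟨(i, j), hij⟩
  have aeval_eq (i j : Fin 3) : aeval p (N i j) = v i * v j := by
    rcases le_total i j with hij | hij
    · exact upper hij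
    · rw [← hN.apply, upper hij, mul_comm]
  have hp : p ≠ 0 := by
    intro hp0
    have hv (i : Fin 3) : v i = 0 := by
      have := aeval_eq i i
      rw [hp0] at this
      simpa [hlin] using this.symm
    refine hq (funext fun i ↦ ?_)
    rcases i with i | i
    exacts [congrFun hp0 i, hv i]
  refine ⟨p, hp, ?_, fun l ↦ ?_⟩
  · simp only [Matrix.det_fin_three, map_add, map_sub, map_mul, aeval_eq]
    ring
  · simp only [Matrix.det_fin_three, map_add, map_sub, pderiv_mul, map_mul, aeval_eq]
    rw [← hN.apply 0 1, ← hN.apply 0 2, ← hN.apply 1 2]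
    ring

theorem hasSingularZero_mul_sub_mul_sq (hσ : 4 ≤ Fintype.card σ) (L : MvPolynomial σ k)
    {P Q d : MvPolynomial σ k} (hP : constantCoeff P = 0) (hQ : constantCoeff Q = 0)
    (hd : constantCoeff d = 0) : HasSingularZero K (P * Q - L * d ^ 2) := by
  obtain ⟨p, hp, hpPQd⟩ := exists_ne_zero_forall_aeval_eq_zero (K := K) ![P, Q, d]
    (by simp [Fin.forall_fin_succ, hP, hQ, hd]) (by rw [Fintype.card_fin]; lia)
  simp only [Fin.forall_fin_succ, ← mem_vanishingIdeal_singleton_iff] at hpPQd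
  obtain ⟨hpP, hpQ, hpd, -⟩ := hpPQd
  exact hasSingularZero_of_mem_sq_vanishingIdeal hp <|
    sub_mem (pow_two (vanishingIdeal k {p}) ▸ Ideal.mul_mem_mul hpP hpQ)
      (Ideal.mul_mem_left _ _ (Ideal.pow_mem_pow hpd 2))

end SingularZeros

section LinearForms

variable {σ R : Type*} [CommRing R]

theorem exists_linearMap_forall_eval_eq [Finite σ] {P : MvPolynomial σ R}
    (hP : P.IsHomogeneous 1) : ∃ φ : (σ → R) →ₗ[R] R, ∀ p, eval p P = φ p := by
  have := Fintype.ofFinite σ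
  rw [← mem_homogeneousSubmodule, homogeneousSubmodule_one_eq_span_X,
    Submodule.mem_span_range_iff_exists_fun] at hP
  obtain ⟨c, rfl⟩ := hP
  exact ⟨∑ i, c i • LinearMap.proj i, fun p ↦ by simp⟩

variable {E ι : Type*} [AddCommGroup E] [Module R E] [Fintype σ]

open Classical in
/-- The matrix of linear forms representing a linear family of endomorphisms in a basis. -/
noncomputable def formMatrix (b : Module.Basis ι R E) (T : (σ → R) →ₗ[R] Module.End R E) :
    Matrix ι ι (MvPolynomial σ R) :=
  .of fun i j ↦ ∑ l, C (b.repr (T (Pi.single l 1) (b j)) i) * X l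

theorem constantCoeff_formMatrix (b : Module.Basis ι R E) (T : (σ → R) →ₗ[R] Module.End R E)
    (i j : ι) : constantCoeff (formMatrix b T i j) = 0 := by
  simp [formMatrix]

theorem eval_formMatrix (b : Module.Basis ι R E) (T : (σ → R) →ₗ[R] Module.End R E) (p : σ → R)
    (i j : ι) : eval p (formMatrix b T i j) = b.repr (T p (b j)) i := by
  classical
  have apply_eq : T p = ∑ l, p l • T (Pi.single l 1) := by
    conv_lhs => rw [pi_eq_sum_univ' p, map_sum]
    simp only [map_smul]
  simp [apply_eq, formMatrix, mul_comm]

theorem eval_det_formMatrix [Fintype ι] [DecidableEq ι] (b : Module.Basis ι R E)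
    (T : (σ → R) →ₗ[R] Module.End R E) (p : σ → R) :
    eval p (formMatrix b T).det = LinearMap.det (T p) := by
  rw [RingHom.map_det, ← LinearMap.det_toMatrix b]
  congr 1
  ext i j
  simp [eval_formMatrix, LinearMap.toMatrix_apply]

theorem det_formMatrix_eq [IsDomain R] [Infinite R] [Fintype ι] [DecidableEq ι]
    (b : Module.Basis ι R E) {T : (σ → R) →ₗ[R] Module.End R E} {D : MvPolynomial σ R}
    (hdet : ∀ p, LinearMap.det (T p) = eval p D) : (formMatrix b T).det = D :=
  MvPolynomial.funext fun p ↦ by rw [eval_det_formMatrix, hdet]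

theorem exists_isHomogeneous_forall_eval_eq_det {σ : Type*} [Finite σ] [Nontrivial R]
    [Module.Free R E] [Module.Finite R E] (T : (σ → R) →ₗ[R] Module.End R E) :
    ∃ D : MvPolynomial σ R, D.IsHomogeneous (Module.finrank R E) ∧
      ∀ p, eval p D = LinearMap.det (T p) := by
  classical
  have := Fintype.ofFinite σ
  set n := Module.finrank R E
  set b := Pi.basisFun R σ
  refine ⟨C ((-1) ^ n) * (LinearMap.polyCharpoly T b).coeff 0,
    (LinearMap.polyCharpoly_coeff_isHomogeneous T b 0 n (zero_add n)).C_mul _, fun p ↦ ?_⟩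
  have coeff_eq := LinearMap.polyCharpoly_coeff_eval T b p 0
  rw [show ⇑(b.repr p) = p from funext (Pi.basisFun_repr R σ p)] at coeff_eq
  rw [map_mul, eval_C, coeff_eq, LinearMap.det_eq_sign_charpoly_coeff]

end LinearForms

section SingularPencils

variable {K : Type*} [Field K] [Infinite K]

/-- The sequence consists of the coefficients of a kernel vector of `A + X B` over `K[X]`, divided
by the highest possible power of `X`. -/
theorem exists_seq_of_forall_det_add_smul_eq_zero {n : Type*} [Fintype n] [DecidableEq n]
    {A B : Matrix n n K} (h : ∀ s : K, s ≠ 0 → (A + s • B).det = 0) :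
    ∃ c : ℕ → n → K, c 0 ≠ 0 ∧ A.mulVec (c 0) = 0 ∧
      ∀ m, A.mulVec (c (m + 1)) + B.mulVec (c m) = 0 := by
  let M : Matrix n n (Polynomial K) :=
    A.map Polynomial.C + (Polynomial.X : Polynomial K) • B.map Polynomial.C
  have map_eval (s : K) : M.map (Polynomial.eval s) = A + s • B := by
    ext i j
    simp [M, mul_comm s]
  have det_eq_zero : M.det = 0 := by
    refine Polynomial.eq_zero_of_infinite_isRoot _
      ((Set.finite_singleton (0 : K)).infinite_compl.mono fun s hs ↦ ?_)
    have := RingHom.map_det (Polynomial.evalRingHom s) M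
    rwa [show (Polynomial.evalRingHom s).mapMatrix M = A + s • B from map_eval s, h s hs] at this
  obtain ⟨v, hv, hMv⟩ := Matrix.exists_mulVec_eq_zero_iff.mpr det_eq_zero
  let c (m : ℕ) (i : n) : K := (v i).coeff m
  have coeff_zero : A.mulVec (c 0) = 0 := by
    ext i
    have := congrArg (Polynomial.coeff · 0) (congrFun hMv i)
    simpa [M, Matrix.mulVec, dotProduct, add_mul, mul_assoc, Polynomial.finsetSum_coeff] using this
  have coeff_succ (m : ℕ) : A.mulVec (c (m + 1)) + B.mulVec (c m) = 0 := by
    ext i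
    have := congrArg (Polynomial.coeff · (m + 1)) (congrFun hMv i)
    simpa [M, Matrix.mulVec, dotProduct, add_mul, mul_assoc, Polynomial.finsetSum_coeff,
      Finset.sum_add_distrib] using this
  have exists_ne : ∃ m, c m ≠ 0 := by
    by_contra! hc
    exact hv (funext fun i ↦ Polynomial.ext fun m ↦ congrFun (hc m) i)
  classical
  refine ⟨fun m ↦ c (Nat.find exists_ne + m), Nat.find_spec exists_ne, ?_, fun m ↦ coeff_succ _⟩
  change A.mulVec (c (Nat.find exists_ne)) = 0
  rcases hd : Nat.find exists_ne with _ | d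
  · exact coeff_zero
  · have := coeff_succ d
    rwa [not_not.mp (Nat.find_min exists_ne (m := d) (by lia)), Matrix.mulVec_zero,
      add_zero] at this

theorem exists_seq_of_forall_ker_add_smul_ne_bot {V : Type*} [AddCommGroup V] [Module K V]
    [FiniteDimensional K V] {A B : Module.End K V} (h : ∀ s : K, s ≠ 0 → (A + s • B).ker ≠ ⊥) :
    ∃ c : ℕ → V, c 0 ≠ 0 ∧ A (c 0) = 0 ∧ ∀ m, A (c (m + 1)) + B (c m) = 0 := by
  let b := Module.finBasis K V
  obtain ⟨c, hc, hA, hAB⟩ := exists_seq_of_forall_det_add_smul_eq_zero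
    (A := LinearMap.toMatrix b b A) (B := LinearMap.toMatrix b b B) fun s hs ↦ by
      rw [← map_smul, ← map_add, LinearMap.det_toMatrix]
      exact LinearMap.det_eq_zero_iff_ker_ne_bot.mpr (h s hs)
  have apply_eq (N : Module.End K V) (m : ℕ) :
      N (b.equivFun.symm (c m)) = b.equivFun.symm ((LinearMap.toMatrix b b N).mulVec (c m)) := by
    have := LinearMap.toMatrix_mulVec_repr b b N (b.equivFun.symm (c m))
    rw [← b.equivFun_apply, ← b.equivFun_apply, LinearEquiv.apply_symm_apply] at this
    rw [this, LinearEquiv.symm_apply_apply]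
  refine ⟨fun m ↦ b.equivFun.symm (c m), b.equivFun.symm.map_ne_zero_iff.mpr hc, ?_, fun m ↦ ?_⟩
  · rw [apply_eq, hA, map_zero]
  · rw [apply_eq, apply_eq, ← map_add, hAB, map_zero]

end SingularPencils

section SingularSymmetricSpaces

open scoped RealInnerProductSpace

variable {E : Type*} [NormedAddCommGroup E] [InnerProductSpace ℝ E] [FiniteDimensional ℝ E]

theorem exists_apply_eq_of_forall_ker_add_smul_ne_bot {A B : Module.End ℝ E}
    (hA : A.IsSymmetric) (hB : B.IsSymmetric) (hAB : ∀ s : ℝ, s ≠ 0 → (A + s • B).ker ≠ ⊥)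
    {k : E} (hk : A.ker = ℝ ∙ k) :
    ∃ y, A y = B k ∧ ⟪B k, k⟫ = 0 ∧ ⟪B k, y⟫ = 0 := by
  have hAk : A k = 0 := by
    rw [← LinearMap.mem_ker, hk]
    exact Submodule.mem_span_singleton_self k
  obtain ⟨c, hc, hAc, hABc⟩ := exists_seq_of_forall_ker_add_smul_ne_bot hAB
  obtain ⟨a, ha⟩ := Submodule.mem_span_singleton.mp (hk ▸ LinearMap.mem_ker.mpr hAc)
  have ha0 : a ≠ 0 := by
    rintro rfl
    exact hc (by rw [← ha, zero_smul])
  have apply_one : A (-a⁻¹ • c 1) = B k := by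
    rw [map_smul, eq_neg_of_add_eq_zero_left (hABc 0), ← ha, map_smul, smul_neg, neg_smul, neg_neg,
      inv_smul_smul₀ ha0]
  refine ⟨-a⁻¹ • c 1, apply_one, ?_, ?_⟩
  · rw [← apply_one, hA, hAk, inner_zero_right]
  · rw [hB, map_smul, eq_neg_of_add_eq_zero_right (hABc 1), inner_smul_right, inner_neg_right, ← hA,
      hAk, inner_zero_left, neg_zero, mul_zero]

variable {W : Submodule ℝ (Module.End ℝ E)}

/-- The symmetric form of `A` vanishes on the preimage under `A` of the space of values at `k`, so
these two spaces are orthogonal. -/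
theorem two_mul_finrank_map_applyₗ_lt (hsymm : ∀ N ∈ W, N.IsSymmetric)
    (hsing : ∀ N ∈ W, N.ker ≠ ⊥) {A : Module.End ℝ E} (hA : A ∈ W) {k : E} (hk : A.ker = ℝ ∙ k) :
    2 * Module.finrank ℝ (W.map (LinearMap.applyₗ k)) < Module.finrank ℝ E := by
  set Z := W.map (LinearMap.applyₗ k)
  set Y := Z.comap A
  have exists_preimage {N : Module.End ℝ E} (hN : N ∈ W) :=
    exists_apply_eq_of_forall_ker_add_smul_ne_bot (hsymm A hA) (hsymm N hN)
      (fun s _ ↦ hsing _ (W.add_mem hA (W.smul_mem s hN))) hk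
  have inner_self {y : E} (hy : y ∈ Y) : ⟪A y, y⟫ = 0 := by
    obtain ⟨N, hN, hNy⟩ := hy
    obtain ⟨y', hy', inner_k, inner_y'⟩ := exists_preimage hN
    rw [LinearMap.applyₗ_apply_apply] at hNy
    obtain ⟨a, ha⟩ : ∃ a : ℝ, a • k = y - y' := by
      rw [← Submodule.mem_span_singleton, ← hk, LinearMap.mem_ker, map_sub, hy', hNy, sub_self]
    rw [← hNy, ← sub_add_cancel y y', ← ha, inner_add_right, inner_smul_right, inner_k, inner_y',
      mul_zero, add_zero]
  have map_eq : Y.map A = Z := by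
    refine Submodule.map_comap_eq_of_le ?_
    rintro _ ⟨N, hN, rfl⟩
    obtain ⟨y, hy, -⟩ := exists_preimage hN
    exact ⟨y, hy⟩
  have le_orthogonal : Z ≤ Yᗮ := by
    rw [← map_eq, Submodule.map_le_iff_le_comap]
    refine fun y hy ↦ (Submodule.mem_orthogonal' _ _).mpr fun x hx ↦ ?_
    have polar := inner_self (Y.add_mem hx hy)
    have swap : ⟪A x, y⟫ = ⟪A y, x⟫ := by rw [hsymm A hA, real_inner_comm]
    rw [map_add, inner_add_left, inner_add_right, inner_add_right, inner_self hx, inner_self hy,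
      swap] at polar
    linarith
  have finrank_Y : Module.finrank ℝ Z + 1 = Module.finrank ℝ Y := by
    have hk0 : k ≠ 0 := by
      rintro rfl
      exact hsing A hA (by rw [hk, Submodule.span_zero_singleton])
    have ker_le : A.ker ≤ Y := fun x hx ↦ by
      rw [Submodule.mem_comap, LinearMap.mem_ker.mp hx]
      exact Z.zero_mem
    rw [← (A.domRestrict Y).finrank_range_add_finrank_ker, LinearMap.range_domRestrict, map_eq,
      LinearMap.ker_domRestrict, (Submodule.comapSubtypeEquivOfLe ker_le).finrank_eq, hk,
      finrank_span_singleton hk0]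
  have finrank_Z_le := Submodule.finrank_mono le_orthogonal
  have finrank_add := Y.finrank_add_finrank_orthogonal
  lia

/-- The compression of an operator to a subspace: restriction followed by orthogonal projection. -/
noncomputable def compression (U : Submodule ℝ E) : Module.End ℝ E →ₗ[ℝ] Module.End ℝ U where
  toFun N := U.orthogonalProjectionOnto.toLinearMap ∘ₗ N ∘ₗ U.subtype
  map_add' N N' := by ext; simp
  map_smul' c N := by ext; simp

theorem inner_compression (U : Submodule ℝ E) (N : Module.End ℝ E) (x y : U) :
    ⟪compression U N x, y⟫ = ⟪N x, (y : E)⟫ := by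
  simp [compression]

theorem compression_apply_eq_zero_iff {U : Submodule ℝ E} {N : Module.End ℝ E} {x : U} :
    compression U N x = 0 ↔ N x ∈ Uᗮ := by
  simp [compression]

theorem isSymmetric_compression {N : Module.End ℝ E} (hN : N.IsSymmetric) (U : Submodule ℝ E) :
    (compression U N).IsSymmetric := fun x y ↦ by
  rw [inner_compression, hN, real_inner_comm, ← inner_compression, real_inner_comm]

theorem exists_forall_apply_eq_zero_of_finrank_eq_two (hE : Module.finrank ℝ E = 2)
    (hsymm : ∀ N ∈ W, N.IsSymmetric) (hsing : ∀ N ∈ W, N.ker ≠ ⊥) :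
    ∃ w ≠ 0, ∀ N ∈ W, N w = 0 := by
  by_cases hW : ∃ A ∈ W, A ≠ 0
  · obtain ⟨A, hA, hA0⟩ := hW
    have finrank_ker : Module.finrank ℝ A.ker ≤ 1 := by
      have := Submodule.finrank_lt (mt LinearMap.ker_eq_top.mp hA0)
      lia
    obtain ⟨w, hw⟩ := (Submodule.finrank_le_one_iff_isPrincipal _).mp finrank_ker
    have finrank_lt := two_mul_finrank_map_applyₗ_lt hsymm hsing hA hw
    have map_eq_bot : W.map (LinearMap.applyₗ w) = ⊥ := Submodule.finrank_eq_zero.mp (by lia)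
    refine ⟨w, ?_, fun N hN ↦ ?_⟩
    · rintro rfl
      exact hsing A hA (by rw [hw, Submodule.span_zero_singleton])
    · exact (Submodule.eq_bot_iff _).mp map_eq_bot _ (Submodule.mem_map_of_mem hN)
  · push Not at hW
    have : Nontrivial E := Module.nontrivial_of_finrank_pos (R := ℝ) (by lia)
    obtain ⟨w, hw⟩ := exists_ne (0 : E)
    exact ⟨w, hw, fun N hN ↦ by rw [hW N hN, LinearMap.zero_apply]⟩

theorem exists_norm_eq_one_eq_span_singleton {S : Submodule ℝ E}
    (hS : Module.finrank ℝ S = 1) : ∃ x, ‖x‖ = 1 ∧ S = ℝ ∙ x := by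
  obtain ⟨x, hx⟩ := (Submodule.finrank_le_one_iff_isPrincipal _).mp hS.le
  have hx0 : x ≠ 0 := by
    rintro rfl
    rw [hx, Submodule.span_zero_singleton, finrank_bot] at hS
    exact zero_ne_one hS
  refine ⟨‖x‖⁻¹ • x, norm_smul_inv_norm (𝕜 := ℝ) hx0, ?_⟩
  rw [hx, Submodule.span_singleton_smul_eq (by simpa using hx0)]

omit [FiniteDimensional ℝ E] in
theorem mem_orthogonal_span_pair {x y z : E} :
    z ∈ (Submodule.span ℝ {x, y})ᗮ ↔ ⟪x, z⟫ = 0 ∧ ⟪y, z⟫ = 0 := by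
  rw [Submodule.span_insert, ← Submodule.inf_orthogonal, Submodule.mem_inf,
    Submodule.mem_orthogonal_singleton_iff_inner_right,
    Submodule.mem_orthogonal_singleton_iff_inner_right]

variable {k ζ : E}

theorem ker_compression_ne_bot_of_apply_eq_smul {N : Module.End ℝ E} (hN : N.IsSymmetric)
    (hker : N.ker ≠ ⊥) (hk : ‖k‖ = 1) (hζ : ζ ≠ 0) (hkζ : ⟪k, ζ⟫ = 0) {c : ℝ} (hc : c ≠ 0)
    (hNk : N k = c • ζ) : (compression (Submodule.span ℝ {k, ζ})ᗮ N).ker ≠ ⊥ := by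
  set U := (Submodule.span ℝ {k, ζ})ᗮ with hU
  have hζU : ζ ∈ Uᗮ := Submodule.le_orthogonal_orthogonal _ (Submodule.mem_span_of_mem (by simp))
  intro hcompr
  refine hker ((Submodule.eq_bot_iff _).mpr fun x hx ↦ ?_)
  rw [LinearMap.mem_ker] at hx
  have inner_ζ : ⟪ζ, x⟫ = 0 := by
    have : c * ⟪ζ, x⟫ = 0 := by rw [← real_inner_smul_left, ← hNk, hN, hx, inner_zero_right]
    simpa [hc] using this
  have mem_U : x - ⟪k, x⟫ • k ∈ U := by
    rw [hU, mem_orthogonal_span_pair, inner_sub_right, inner_sub_right, inner_smul_right,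
      inner_smul_right, real_inner_self_eq_norm_sq, hk, inner_ζ, real_inner_comm k ζ, hkζ]
    simp
  have apply_mem : N (x - ⟪k, x⟫ • k) ∈ Uᗮ := by
    rw [map_sub, map_smul, hx, hNk, zero_sub, smul_smul]
    exact Uᗮ.neg_mem (Uᗮ.smul_mem _ hζU)
  have x_eq : x = ⟪k, x⟫ • k := by
    have := LinearMap.ker_eq_bot'.mp hcompr ⟨_, mem_U⟩ (compression_apply_eq_zero_iff.mpr apply_mem)
    exact sub_eq_zero.mp (congrArg Subtype.val this)
  rw [x_eq, map_smul, hNk] at hx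
  rw [x_eq, (smul_eq_zero.mp hx).resolve_right (smul_ne_zero hc hζ), zero_smul]

theorem ker_compression_ne_bot (hsymm : ∀ N ∈ W, N.IsSymmetric) (hsing : ∀ N ∈ W, N.ker ≠ ⊥)
    (hk : ‖k‖ = 1) (hζ : ζ ≠ 0) (hkζ : ⟪k, ζ⟫ = 0) (hmap : W.map (LinearMap.applyₗ k) = ℝ ∙ ζ)
    {N : Module.End ℝ E} (hN : N ∈ W) : (compression (Submodule.span ℝ {k, ζ})ᗮ N).ker ≠ ⊥ := by
  obtain ⟨a, ha⟩ : ∃ a : ℝ, a • ζ = N k := by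
    rw [← Submodule.mem_span_singleton, ← hmap]
    exact Submodule.mem_map_of_mem hN
  have of_apply_eq_smul {M : Module.End ℝ E} (hM : M ∈ W) {c : ℝ} (hc : c ≠ 0)
      (hMk : M k = c • ζ) : (compression (Submodule.span ℝ {k, ζ})ᗮ M).ker ≠ ⊥ :=
    ker_compression_ne_bot_of_apply_eq_smul (hsymm M hM) (hsing M hM) hk hζ hkζ hc hMk
  obtain rfl | ha0 := eq_or_ne a 0
  · obtain ⟨N₀, hN₀, hN₀k⟩ : ζ ∈ W.map (LinearMap.applyₗ k) :=
      hmap ▸ Submodule.mem_span_singleton_self ζ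
    rw [LinearMap.applyₗ_apply_apply] at hN₀k
    obtain ⟨v, hv0, hv, -⟩ := exists_seq_of_forall_ker_add_smul_ne_bot
      (A := compression (Submodule.span ℝ {k, ζ})ᗮ N)
      (B := compression (Submodule.span ℝ {k, ζ})ᗮ N₀) fun s hs ↦ by
        rw [← map_smul, ← map_add]
        refine of_apply_eq_smul (W.add_mem hN (W.smul_mem s hN₀)) hs ?_
        rw [LinearMap.add_apply, LinearMap.smul_apply, ← ha, hN₀k, zero_smul, zero_add]
    exact fun hker ↦ hv0 (LinearMap.ker_eq_bot'.mp hker _ hv)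
  · exact of_apply_eq_smul hN ha0 ha.symm

theorem exists_orthonormal_forall_apply_mem_span (hE : Module.finrank ℝ E = 4)
    (hsymm : ∀ N ∈ W, N.IsSymmetric) (hsing : ∀ N ∈ W, N.ker ≠ ⊥) (hk : ‖k‖ = 1) (hζ : ‖ζ‖ = 1)
    (hkζ : ⟪k, ζ⟫ = 0) (hmap : W.map (LinearMap.applyₗ k) = ℝ ∙ ζ) :
    ∃ w, Orthonormal ℝ ![k, ζ, w] ∧ ∀ N ∈ W, N w ∈ ℝ ∙ ζ := by
  have hζ0 : ζ ≠ 0 := norm_ne_zero_iff.mp (hζ ▸ one_ne_zero)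
  set U := (Submodule.span ℝ {k, ζ})ᗮ with hU
  have finrank_U : Module.finrank ℝ U = 2 := by
    have orthonormal : Orthonormal ℝ ![k, ζ] := by simp [orthonormal_vecCons_iff, hk, hζ, hkζ]
    have finrank_span := finrank_span_eq_card orthonormal.linearIndependent
    rw [Matrix.range_cons_cons_empty, Fintype.card_fin] at finrank_span
    refine Nat.add_left_cancel (n := Module.finrank ℝ (Submodule.span ℝ {k, ζ})) ?_
    rw [hU, Submodule.finrank_add_finrank_orthogonal, hE, finrank_span]
  obtain ⟨w, hw0, hw⟩ := exists_forall_apply_eq_zero_of_finrank_eq_two (W := W.map (compression U))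
    finrank_U (by rintro _ ⟨N, hN, rfl⟩; exact isSymmetric_compression (hsymm N hN) U)
    (by rintro _ ⟨N, hN, rfl⟩; exact ker_compression_ne_bot hsymm hsing hk hζ0 hkζ hmap hN)
  obtain ⟨inner_k, inner_ζ⟩ := mem_orthogonal_span_pair.mp w.2
  have apply_mem {N : Module.End ℝ E} (hN : N ∈ W) : N w ∈ ℝ ∙ ζ := by
    have mem_orthogonal := compression_apply_eq_zero_iff.mp (hw _ (Submodule.mem_map_of_mem hN))
    obtain ⟨a, b, hab⟩ := Submodule.mem_span_pair.mp <|
      (Submodule.orthogonal_orthogonal (Submodule.span ℝ {k, ζ})).le mem_orthogonal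
    obtain ⟨c, hc⟩ : ∃ c : ℝ, c • ζ = N k := by
      rw [← Submodule.mem_span_singleton, ← hmap]
      exact Submodule.mem_map_of_mem hN
    have inner_apply : ⟪k, N w⟫ = 0 := by
      rw [← hsymm N hN, ← hc, inner_smul_left, inner_ζ, mul_zero]
    have ha : a = 0 := by
      simpa [← hab, inner_add_right, inner_smul_right, hk, hkζ] using inner_apply
    exact Submodule.mem_span_singleton.mpr ⟨b, by rw [← hab, ha, zero_smul, zero_add]⟩
  refine ⟨‖(w : E)‖⁻¹ • (w : E), ?_, fun N hN ↦ ?_⟩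
  · have norm_eq : ‖‖(w : E)‖⁻¹ • (w : E)‖ = 1 :=
      norm_smul_inv_norm (𝕜 := ℝ) (Submodule.coe_eq_zero.not.mpr hw0)
    simp [orthonormal_vecCons_iff, hk, hζ, hkζ, norm_eq, inner_smul_right, inner_k, inner_ζ]
  · rw [map_smul]
    exact Submodule.smul_mem _ _ (apply_mem hN)

theorem exists_forall_apply_eq_zero_or_exists_orthonormal (hE : Module.finrank ℝ E = 4)
    (hsymm : ∀ N ∈ W, N.IsSymmetric) (hsing : ∀ N ∈ W, N.ker ≠ ⊥)
    (hker : ∃ A ∈ W, Module.finrank ℝ A.ker = 1) :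
    (∃ k, ‖k‖ = 1 ∧ ∀ N ∈ W, N k = 0) ∨
      ∃ k ζ w, Orthonormal ℝ ![k, ζ, w] ∧ ∀ N ∈ W, N k ∈ ℝ ∙ ζ ∧ N w ∈ ℝ ∙ ζ := by
  obtain ⟨A, hA, hker⟩ := hker
  obtain ⟨k, hk, hAk⟩ := exists_norm_eq_one_eq_span_singleton hker
  have finrank_lt := two_mul_finrank_map_applyₗ_lt hsymm hsing hA hAk
  have map_mem {N : Module.End ℝ E} (hN : N ∈ W) : N k ∈ W.map (LinearMap.applyₗ k) :=
    Submodule.mem_map_of_mem hN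
  obtain finrank_eq | finrank_eq : Module.finrank ℝ (W.map (LinearMap.applyₗ k)) = 0 ∨
    Module.finrank ℝ (W.map (LinearMap.applyₗ k)) = 1 := by lia
  · refine .inl ⟨k, hk, fun N hN ↦ ?_⟩
    exact (Submodule.eq_bot_iff _).mp (Submodule.finrank_eq_zero.mp finrank_eq) _ (map_mem hN)
  · obtain ⟨ζ, hζ, hmap⟩ := exists_norm_eq_one_eq_span_singleton finrank_eq
    have hkζ : ⟪k, ζ⟫ = 0 := by
      obtain ⟨N, hN, rfl⟩ : ζ ∈ W.map (LinearMap.applyₗ k) :=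
        hmap ▸ Submodule.mem_span_singleton_self ζ
      obtain ⟨-, -, inner_eq, -⟩ := exists_apply_eq_of_forall_ker_add_smul_ne_bot (hsymm A hA)
        (hsymm N hN) (fun s _ ↦ hsing _ (W.add_mem hA (W.smul_mem s hN))) hAk
      rw [real_inner_comm]
      exact inner_eq
    obtain ⟨w, orthonormal, hw⟩ :=
      exists_orthonormal_forall_apply_mem_span hE hsymm hsing hk hζ hkζ hmap
    exact .inr ⟨k, ζ, w, orthonormal, fun N hN ↦ ⟨hmap ▸ map_mem hN, hw N hN⟩⟩

end SingularSymmetricSpaces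

section PositiveOperators

open scoped RealInnerProductSpace

variable {E : Type*} [NormedAddCommGroup E] [InnerProductSpace ℝ E] [FiniteDimensional ℝ E]
  {S : Module.End ℝ E}

open scoped MatrixOrder in
theorem exists_eq_star_mul_self (hS : S.IsPositive) : ∃ R, S = star R * R := by
  set Φ := LinearMap.toMatrixOrthonormal (stdOrthonormalBasis ℝ E)
  have nonneg : 0 ≤ Φ S := ((LinearMap.posSemidef_toMatrix_iff _).mpr hS).nonneg
  obtain ⟨B, hB⟩ := CStarAlgebra.nonneg_iff_eq_star_mul_self.mp nonneg
  exact ⟨Φ.symm B, by rw [← map_star, ← map_mul, ← hB, StarAlgEquiv.symm_apply_apply]⟩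

theorem exists_star_mul_mul_eq_one (hS : S.IsPositive) (hunit : IsUnit S) :
    ∃ G, star G * S * G = 1 := by
  obtain ⟨R, rfl⟩ := exists_eq_star_mul_self hS
  have isUnit_R : IsUnit R := by
    rw [LinearMap.isUnit_iff_isUnit_det, map_mul] at hunit
    exact (LinearMap.isUnit_iff_isUnit_det R).mpr (isUnit_of_mul_isUnit_right hunit)
  obtain ⟨u, rfl⟩ := isUnit_R
  refine ⟨↑u⁻¹, ?_⟩
  rw [mul_assoc, mul_assoc, Units.mul_inv, mul_one, ← star_mul, Units.mul_inv, star_one]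

theorem inner_apply_self_eq_zero_iff (hS : S.IsPositive) {x : E} : ⟪S x, x⟫ = 0 ↔ S x = 0 := by
  refine ⟨fun hx ↦ ?_, fun hx ↦ by rw [hx, inner_zero_left]⟩
  obtain ⟨R, rfl⟩ := exists_eq_star_mul_self hS
  rw [Module.End.mul_apply, LinearMap.star_eq_adjoint, LinearMap.adjoint_inner_left,
    inner_self_eq_zero] at hx
  rw [Module.End.mul_apply, hx, map_zero]

theorem isPositive_add_starProjection_iff (hS : S.IsSymmetric) {U : Submodule ℝ E}
    (hU : U ≤ S.ker) : (S + U.starProjection.toLinearMap).IsPositive ↔ S.IsPositive := by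
  refine ⟨fun hpos ↦ ⟨hS, fun x ↦ ?_⟩, fun hpos ↦
    hpos.add (Submodule.isSymmetricProjection_starProjection U).isPositive⟩
  have apply_proj : S (U.starProjection x) = 0 := hU (U.starProjection_apply_mem x)
  set y := x - U.starProjection x
  have proj_y : U.starProjection y = 0 :=
    U.starProjection_apply_eq_zero_iff.mpr (U.sub_starProjection_mem_orthogonal x)
  have inner_eq : ⟪S x, x⟫ = ⟪(S + U.starProjection.toLinearMap) y, y⟫ := by
    rw [LinearMap.add_apply, ContinuousLinearMap.coe_coe, proj_y, add_zero, map_sub, apply_proj,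
      sub_zero, inner_sub_right, hS x (U.starProjection x), apply_proj, inner_zero_right, sub_zero]
  rw [inner_eq]
  exact hpos.re_inner_nonneg_left y

theorem isUnit_add_starProjection_ker (hS : S.IsSymmetric) :
    IsUnit (S + S.ker.starProjection.toLinearMap) := by
  rw [LinearMap.isUnit_iff_ker_eq_bot, LinearMap.ker_eq_bot']
  intro x hx
  rw [LinearMap.add_apply, ContinuousLinearMap.coe_coe] at hx
  have proj_x : S.ker.starProjection x = 0 := by
    rw [← inner_self_eq_zero (𝕜 := ℝ)]
    nth_rw 1 [eq_neg_of_add_eq_zero_right hx]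
    rw [inner_neg_left, hS, S.ker.starProjection_apply_mem x, inner_zero_right, neg_zero]
  rw [proj_x, add_zero] at hx
  rw [← proj_x, Submodule.starProjection_eq_self_iff.mpr hx]

end PositiveOperators

section Corank

variable {σ V : Type*} [Finite σ] [AddCommGroup V] [Module ℝ V] [FiniteDimensional ℝ V]
  {T : (σ → ℝ) →ₗ[ℝ] Module.End ℝ V} {L F : MvPolynomial σ ℝ}

theorem eval_eq_zero_of_one_lt_finrank_ker {e : σ → ℝ} (he : T e = 1) (hL : L.IsHomogeneous 1)
    (hLe : eval e L = 1) (hdet : ∀ p, LinearMap.det (T p) = eval p (L * F)) {p : σ → ℝ}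
    (hLp : eval p L = 0) (hker : 1 < Module.finrank ℝ (T p).ker) : eval p F = 0 := by
  obtain ⟨φ, hφ⟩ := exists_linearMap_forall_eval_eq hL
  obtain ⟨h, hh⟩ : Polynomial.X ^ 2 ∣ (-T p).charpoly := by
    rw [← sub_zero Polynomial.X, ← map_zero Polynomial.C,
      ← Polynomial.le_rootMultiplicity_iff (LinearMap.charpoly_monic _).ne_zero]
    refine le_trans ?_ (LinearMap.finrank_eigenspace_le (-T p) 0)
    rwa [Module.End.eigenspace_zero, LinearMap.ker_neg]
  have eval_eq {s : ℝ} (hs : s ≠ 0) : eval (p + s • e) F = s * h.eval s := by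
    refine mul_left_cancel₀ hs ?_
    calc s * eval (p + s • e) F = LinearMap.det (T (p + s • e)) := by
          rw [hdet, map_mul, hφ, map_add, map_smul, ← hφ, ← hφ, hLp, hLe, zero_add, smul_eq_mul,
            mul_one]
      _ = (-T p).charpoly.eval s := by
          rw [LinearMap.eval_charpoly, map_add, map_smul, he, Algebra.algebraMap_eq_smul_one,
            sub_neg_eq_add, add_comm]
      _ = s * (s * h.eval s) := by
          rw [hh, Polynomial.eval_mul, Polynomial.eval_pow, Polynomial.eval_X, pow_two, mul_assoc]
  have eval_line : (fun s : ℝ ↦ eval (p + s • e) F) = fun s ↦ s * h.eval s :=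
    Continuous.ext_on (dense_compl_singleton 0) ((continuous_eval F).comp (by fun_prop))
      (by fun_prop) fun s hs ↦ eval_eq hs
  simpa using congrFun eval_line 0

theorem exists_finrank_ker_eq_one {e : σ → ℝ} (he : T e = 1) (hL : L.IsHomogeneous 1)
    (hLe : eval e L = 1) (hLF : ¬L ∣ F) (hdet : ∀ p, LinearMap.det (T p) = eval p (L * F)) :
    ∃ p, eval p L = 0 ∧ Module.finrank ℝ (T p).ker = 1 := by
  by_contra! hne
  have irreducible_L : Irreducible L := by
    have hL0 : L ≠ 0 := by
      rintro rfl
      simp at hLe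
    refine irreducible_of_totalDegree_eq_one (hL.totalDegree hL0) fun c hc ↦ ?_
    rw [isUnit_iff_ne_zero]
    rintro rfl
    exact hL0 (MvPolynomial.ext _ _ fun i ↦ by simpa using hc i)
  refine hLF (dvd_of_forall_eval_eq_zero hL odd_one irreducible_L fun p hp ↦ ?_)
  refine eval_eq_zero_of_one_lt_finrank_ker he hL hLe hdet hp ?_
  have ker_ne_bot : (T p).ker ≠ ⊥ := by
    rw [← LinearMap.det_eq_zero_iff_ker_ne_bot, hdet, map_mul, hp, zero_mul]
  have := Submodule.one_le_finrank_iff.mpr ker_ne_bot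
  have := hne p hp
  lia

end Corank

section DeterminantalRepresentations

open scoped RealInnerProductSpace

variable {σ E : Type*} [Fintype σ] [NormedAddCommGroup E] [InnerProductSpace ℝ E]
  {T : (σ → ℝ) →ₗ[ℝ] Module.End ℝ E} {L F : MvPolynomial σ ℝ}

theorem eval_formMatrix_orthonormalBasis {ι : Type*} [Fintype ι] (b : OrthonormalBasis ι ℝ E)
    (T : (σ → ℝ) →ₗ[ℝ] Module.End ℝ E) (p : σ → ℝ) (i j : ι) :
    eval p (formMatrix b.toBasis T i j) = ⟪b i, T p (b j)⟫ := by
  rw [eval_formMatrix, b.coe_toBasis, b.coe_toBasis_repr_apply, b.repr_apply_apply]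

theorem isSymm_formMatrix {ι : Type*} [Fintype ι] (b : OrthonormalBasis ι ℝ E)
    (hsymm : ∀ p, (T p).IsSymmetric) : (formMatrix b.toBasis T).IsSymm := by
  refine Matrix.IsSymm.ext fun i j ↦ funext fun p ↦ ?_
  rw [eval_formMatrix_orthonormalBasis, eval_formMatrix_orthonormalBasis, ← hsymm,
    real_inner_comm]

variable [FiniteDimensional ℝ E]

theorem exists_orthonormalBasis_castLE {m n : ℕ} (hE : Module.finrank ℝ E = n)
    (hmn : m ≤ n) {v : Fin m → E} (hv : Orthonormal ℝ v) :
    ∃ b : OrthonormalBasis (Fin n) ℝ E, ∀ i, b (Fin.castLE hmn i) = v i := by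
  have hv' : Orthonormal ℝ ({i : Fin n | (i : ℕ) < m}.domRestrict
      fun i ↦ if hi : (i : ℕ) < m then v ⟨i, hi⟩ else 0) := by
    convert! hv.comp (fun i : {i : Fin n | (i : ℕ) < m} ↦ ⟨i, i.2⟩) fun i j hij ↦ by
      simpa [Subtype.ext_iff, Fin.ext_iff] using hij using 1
    ext i
    exact dif_pos i.2
  obtain ⟨b, hb⟩ := hv'.exists_orthonormalBasis_extension_of_card_eq (by simpa using hE)
  exact ⟨b, fun i ↦ by rw [hb _ i.2]; exact dif_pos i.2⟩

theorem hasSingularZero_of_forall_apply_eq_smul (hσ : 4 ≤ Fintype.card σ)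
    (hE : Module.finrank ℝ E = 4) (hsymm : ∀ p, (T p).IsSymmetric) (hL : L ≠ 0)
    (hdet : ∀ p, LinearMap.det (T p) = eval p (L * F)) {k : E} (hk : ‖k‖ = 1)
    (hTk : ∀ p, T p k = eval p L • k) : HasSingularZero ℂ F := by
  obtain ⟨b, hb⟩ := exists_orthonormalBasis_castLE hE (show 1 ≤ 4 by simp) (v := ![k])
    (by simp [hk])
  replace hb : b 0 = k := hb 0
  set N := formMatrix b.toBasis T
  have eval_zero (i : Fin 4) (p : σ → ℝ) : eval p (N i 0) = if i = 0 then eval p L else 0 := by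
    rw [eval_formMatrix_orthonormalBasis, hb, hTk, ← hb, inner_smul_right,
      orthonormal_iff_ite.mp b.orthonormal, mul_ite, mul_one, mul_zero]
  have apply_zero : N 0 0 = L := funext fun p ↦ by rw [eval_zero, if_pos rfl]
  have apply_succ (i : Fin 3) : N i.succ 0 = 0 := funext fun p ↦ by
    rw [eval_zero, if_neg i.succ_ne_zero, map_zero]
  have det_eq : N.det = L * (N.submatrix Fin.succ Fin.succ).det := by
    rw [Matrix.det_succ_column_zero, Fin.sum_univ_succ]
    simp [apply_zero, apply_succ, Fin.succAbove_zero]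
  have F_eq : F = (N.submatrix Fin.succ Fin.succ).det :=
    mul_left_cancel₀ hL (by rw [← det_eq, det_formMatrix_eq b.toBasis hdet])
  rw [F_eq]
  exact hasSingularZero_det_fin_three hσ ((isSymm_formMatrix b hsymm).submatrix _)
    fun i j ↦ constantCoeff_formMatrix b.toBasis T i.succ j.succ

theorem hasSingularZero_of_forall_apply_sub_smul_mem (hσ : 4 ≤ Fintype.card σ)
    (hE : Module.finrank ℝ E = 4) (hsymm : ∀ p, (T p).IsSymmetric) (hL : L ≠ 0)
    (hdet : ∀ p, LinearMap.det (T p) = eval p (L * F)) {k ζ w : E}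
    (horth : Orthonormal ℝ ![k, ζ, w]) (hTk : ∀ p, T p k - eval p L • k ∈ ℝ ∙ ζ)
    (hTw : ∀ p, T p w - eval p L • w ∈ ℝ ∙ ζ) : HasSingularZero ℂ F := by
  obtain ⟨b, hb⟩ := exists_orthonormalBasis_castLE hE (show 3 ≤ 4 by simp) horth
  have hbk : b 0 = k := hb 0
  have hbζ : b 1 = ζ := hb 1
  have hbw : b 2 = w := hb 2
  set N := formMatrix b.toBasis T
  have apply_eq {j : Fin 4} (hj : ∀ p, T p (b j) - eval p L • b j ∈ ℝ ∙ b 1) {i : Fin 4}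
      (hi : i ≠ 1) : N i j = if i = j then L else 0 := funext fun p ↦ by
    obtain ⟨c, hc⟩ := Submodule.mem_span_singleton.mp (hj p)
    rw [eval_formMatrix_orthonormalBasis, ← sub_add_cancel (T p (b j)) (eval p L • b j), ← hc,
      inner_add_right, inner_smul_right, inner_smul_right, b.inner_eq_zero hi,
      orthonormal_iff_ite.mp b.orthonormal, apply_ite (eval p)]
    simp
  have apply_zero {i : Fin 4} (hi : i ≠ 1) : N i 0 = if i = 0 then L else 0 :=
    apply_eq (by rwa [hbk, hbζ]) hi
  have apply_two {i : Fin 4} (hi : i ≠ 1) : N i 2 = if i = 2 then L else 0 :=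
    apply_eq (by rwa [hbw, hbζ]) hi
  have symm (i j : Fin 4) : N i j = N j i := (isSymm_formMatrix b hsymm).apply j i
  have constantCoeff_eq (i j : Fin 4) : constantCoeff (N i j) = 0 :=
    constantCoeff_formMatrix b.toBasis T i j
  have det_eq : N.det =
      L * (N 3 3 * (L * N 1 1 - N 1 0 ^ 2 - N 1 2 ^ 2) - L * N 1 3 ^ 2) := by
    simp [Matrix.det_succ_row_zero, Fin.sum_univ_succ, Fin.succAbove, apply_zero, apply_two,
      symm 0, symm 2, symm 3 1]
    ring
  have F_eq : F = N 3 3 * (L * N 1 1 - N 1 0 ^ 2 - N 1 2 ^ 2) - L * N 1 3 ^ 2 :=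
    mul_left_cancel₀ hL (by rw [← det_eq, det_formMatrix_eq b.toBasis hdet])
  rw [F_eq]
  refine hasSingularZero_mul_sub_mul_sq hσ L (constantCoeff_eq 3 3) ?_ (constantCoeff_eq 1 3)
  have L_eq : N 0 0 = L := apply_zero (by simp)
  simp [constantCoeff_eq, ← L_eq]

/-- The operators `N p = T p - L p • 1` form a linear space of singular operators: `N p` is the
value of `T` at the projection of `p` along `e` to `L = 0`. -/
theorem hasSingularZero_of_apply_eq_one (hσ : 4 ≤ Fintype.card σ) (hE : Module.finrank ℝ E = 4)
    (hsymm : ∀ p, (T p).IsSymmetric) {e : σ → ℝ} (he : T e = 1) (hL : L.IsHomogeneous 1)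
    (hLe : eval e L = 1) (hLF : ¬L ∣ F) (hdet : ∀ p, LinearMap.det (T p) = eval p (L * F)) :
    HasSingularZero ℂ F := by
  obtain ⟨φ, hφ⟩ := exists_linearMap_forall_eval_eq hL
  have hL0 : L ≠ 0 := by
    rintro rfl
    simp at hLe
  set N := T - φ.smulRight 1
  have N_apply (p : σ → ℝ) : N p = T p - eval p L • 1 := by simp [N, hφ]
  have hsymm_N : ∀ A ∈ N.range, A.IsSymmetric := by
    rintro _ ⟨p, rfl⟩
    rw [N_apply]
    exact (hsymm p).sub (.smul (by simp) .one)
  have hsing_N : ∀ A ∈ N.range, A.ker ≠ ⊥ := by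
    rintro _ ⟨p, rfl⟩
    have apply_eq : N p = T (p - φ p • e) := by rw [N_apply, map_sub, map_smul, he, hφ]
    have eval_eq : eval (p - φ p • e) L = 0 := by
      rw [hφ, map_sub, map_smul, ← hφ e, hLe, smul_eq_mul, mul_one, sub_self]
    rw [← LinearMap.det_eq_zero_iff_ker_ne_bot, apply_eq, hdet, map_mul,
      eval_eq, zero_mul]
  have hker : ∃ A ∈ N.range, Module.finrank ℝ A.ker = 1 := by
    obtain ⟨p, hp, hker⟩ := exists_finrank_ker_eq_one he hL hLe hLF hdet
    refine ⟨N p, LinearMap.mem_range_self N p, ?_⟩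
    rwa [N_apply, hp, zero_smul, sub_zero]
  have sub_eq (p : σ → ℝ) (x : E) : T p x - eval p L • x = N p x := by simp [N_apply]
  obtain ⟨k, hk, hNk⟩ | ⟨k, ζ, w, horth, hN⟩ :=
    exists_forall_apply_eq_zero_or_exists_orthonormal hE hsymm_N hsing_N hker
  · refine hasSingularZero_of_forall_apply_eq_smul hσ hE hsymm hL0 hdet hk fun p ↦ ?_
    rw [← sub_eq_zero, sub_eq, hNk _ (LinearMap.mem_range_self N p)]
  · refine hasSingularZero_of_forall_apply_sub_smul_mem hσ hE hsymm hL0 hdet horth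
      (fun p ↦ ?_) fun p ↦ ?_
    · exact sub_eq p k ▸ (hN _ (LinearMap.mem_range_self N p)).1
    · exact sub_eq p w ▸ (hN _ (LinearMap.mem_range_self N p)).2

theorem hasSingularZero_of_isPositive (hσ : 4 ≤ Fintype.card σ) (hE : Module.finrank ℝ E = 4)
    (hsymm : ∀ p, (T p).IsSymmetric) {e : σ → ℝ} (hpos : (T e).IsPositive) (hunit : IsUnit (T e))
    (hL : L.IsHomogeneous 1) (hLF : ¬L ∣ F)
    (hdet : ∀ p, LinearMap.det (T p) = eval p (L * F)) : HasSingularZero ℂ F := by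
  obtain ⟨G, hG⟩ := exists_star_mul_mul_eq_one hpos hunit
  set T' : (σ → ℝ) →ₗ[ℝ] Module.End ℝ E :=
    LinearMap.mulRight ℝ G ∘ₗ LinearMap.mulLeft ℝ (star G) ∘ₗ T
  have T'_apply (p : σ → ℝ) : T' p = star G * T p * G := rfl
  set c := LinearMap.det (star G) * LinearMap.det G
  set a := eval e L
  have det_T' (p : σ → ℝ) : LinearMap.det (T' p) = c * eval p (L * F) := by
    rw [T'_apply, map_mul, map_mul, hdet]
    ring
  have normalized : c * a * eval e F = 1 := by
    rw [mul_assoc, ← map_mul, ← det_T', T'_apply, hG, map_one]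
  have ca_ne_zero : c * a ≠ 0 := left_ne_zero_of_mul_eq_one normalized
  have a_ne_zero : a ≠ 0 := right_ne_zero_of_mul ca_ne_zero
  refine HasSingularZero.of_C_mul ca_ne_zero <|
    hasSingularZero_of_apply_eq_one (T := T') (L := C a⁻¹ * L) hσ hE (fun p ↦ ?_) hG (hL.C_mul _)
      ?_ ?_ fun p ↦ ?_
  · rw [LinearMap.isSymmetric_iff_isSelfAdjoint]
    exact ((LinearMap.isSymmetric_iff_isSelfAdjoint _).mp (hsymm p)).conjugate' G
  · rw [map_mul, eval_C, inv_mul_cancel₀ a_ne_zero]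
  · intro hdvd
    exact hLF ((ca_ne_zero.isUnit.map C).dvd_mul_left.mp (dvd_of_mul_left_dvd hdvd))
  · rw [det_T', map_mul, map_mul, map_mul, map_mul, eval_C, eval_C]
    field_simp

end DeterminantalRepresentations

section Spectrahedra

open scoped RealInnerProductSpace Topology

variable {V E : Type*} [NormedAddCommGroup V] [NormedSpace ℝ V] [NormedAddCommGroup E]
  [InnerProductSpace ℝ E] {A : Module.End ℝ E} {B : V →ₗ[ℝ] Module.End ℝ E}

/-- The set on which the affine family of operators `A + B q` is positive semidefinite. -/
def spectrahedron (A : Module.End ℝ E) (B : V →ₗ[ℝ] Module.End ℝ E) : Set V :=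
  {q | (A + B q).IsPositive}

variable [FiniteDimensional ℝ E]

theorem ker_le_ker_of_mem_interior_spectrahedron {q₀ : V} (hq₀ : q₀ ∈ interior (spectrahedron A B))
    (q : V) : (A + B q₀).ker ≤ (A + B q).ker := by
  intro x hx
  rw [LinearMap.mem_ker] at hx ⊢
  have apply_eq (t : ℝ) : (A + B (q₀ + t • (q - q₀))) x = t • B (q - q₀) x := by
    rw [map_add, ← add_assoc, LinearMap.add_apply, hx, zero_add, map_smul, LinearMap.smul_apply]
  have eventually_pos : ∀ᶠ t in 𝓝 (0 : ℝ), (A + B (q₀ + t • (q - q₀))).IsPositive := by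
    have tendsto_line : Filter.Tendsto (fun t : ℝ ↦ q₀ + t • (q - q₀)) (𝓝 0) (𝓝 q₀) := by
      have : Continuous fun t : ℝ ↦ q₀ + t • (q - q₀) := by fun_prop
      simpa using this.tendsto 0
    exact tendsto_line.eventually (mem_interior_iff_mem_nhds.mp hq₀)
  obtain ⟨ε, hε, hpos⟩ := Metric.eventually_nhds_iff.mp eventually_pos
  simp only [dist_zero_right, Real.norm_eq_abs] at hpos
  have nonneg {t : ℝ} (ht : |t| < ε) : 0 ≤ t * ⟪B (q - q₀) x, x⟫ := by
    rw [← real_inner_smul_left, ← apply_eq]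
    exact (hpos ht).re_inner_nonneg_left x
  have abs_lt : |ε / 2| < ε := by rw [abs_of_pos (half_pos hε)]; exact half_lt_self hε
  have inner_eq : ⟪(A + B (q₀ + (ε / 2) • (q - q₀))) x, x⟫ = 0 := by
    have := nonneg abs_lt
    have := nonneg ((abs_neg (ε / 2)).trans_lt abs_lt)
    rw [apply_eq, real_inner_smul_left]
    linarith
  have apply_direction : B (q - q₀) x = 0 := by
    rw [inner_apply_self_eq_zero_iff (hpos abs_lt), apply_eq] at inner_eq
    exact (smul_eq_zero.mp inner_eq).resolve_left (half_pos hε).ne'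
  rw [← add_sub_cancel q₀ q, ← one_smul ℝ (q - q₀), apply_eq, apply_direction, smul_zero]

theorem exists_spectrahedron_eq_and_isUnit (hA : A.IsSymmetric) (hB : ∀ q, (B q).IsSymmetric)
    (hint : (interior (spectrahedron A B)).Nonempty) :
    ∃ A' : Module.End ℝ E, A'.IsSymmetric ∧ spectrahedron A' B = spectrahedron A B ∧
      ∃ q ∈ spectrahedron A' B, IsUnit (A' + B q) := by
  obtain ⟨q₀, hq₀⟩ := hint
  have add_right_comm (q : V) : A + (A + B q₀).ker.starProjection.toLinearMap + B q =
      A + B q + (A + B q₀).ker.starProjection.toLinearMap := add_right_comm _ _ _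
  have spectrahedron_eq :
      spectrahedron (A + (A + B q₀).ker.starProjection.toLinearMap) B = spectrahedron A B := by
    ext q
    simp only [spectrahedron, Set.mem_ofPred_eq, add_right_comm]
    exact isPositive_add_starProjection_iff (hA.add (hB q))
      (ker_le_ker_of_mem_interior_spectrahedron hq₀ q)
  refine ⟨_, hA.add (Submodule.starProjection_isSymmetric _), spectrahedron_eq, q₀, ?_, ?_⟩
  · rw [spectrahedron_eq]
    exact interior_subset hq₀
  · rw [add_right_comm]
    exact isUnit_add_starProjection_ker (hA.add (hB q₀))

variable [FiniteDimensional ℝ V]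

variable (A B) in
theorem continuous_inner_add_apply_self :
    Continuous fun z : V × E ↦ ⟪(A + B z.1) z.2, z.2⟫ := by
  have continuous_B : Continuous fun q ↦ LinearMap.toContinuousLinearMap (B q) :=
    (LinearMap.toContinuousLinearMap.toLinearMap ∘ₗ B).continuous_of_finiteDimensional
  have continuous_A : Continuous A := A.continuous_of_finiteDimensional
  have continuous_apply : Continuous fun z : V × E ↦ A z.2 + B z.1 z.2 :=
    (continuous_A.comp continuous_snd).add
      ((continuous_B.comp continuous_fst).clm_apply continuous_snd)
  exact continuous_apply.inner continuous_snd

theorem isClosed_spectrahedron (hA : A.IsSymmetric) (hB : ∀ q, (B q).IsSymmetric) :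
    IsClosed (spectrahedron A B) := by
  have eq_iInter : spectrahedron A B = ⋂ x, {q | 0 ≤ ⟪(A + B q) x, x⟫} := by
    ext q
    simp [spectrahedron, LinearMap.IsPositive, hA.add (hB q)]
  rw [eq_iInter]
  exact isClosed_iInter fun x ↦ isClosed_le continuous_const
    ((continuous_inner_add_apply_self A B).comp (.prodMk_left x))

theorem mem_interior_spectrahedron (hA : A.IsSymmetric) (hB : ∀ q, (B q).IsSymmetric) {q : V}
    (hq : q ∈ spectrahedron A B) (hunit : IsUnit (A + B q)) :
    q ∈ interior (spectrahedron A B) := by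
  have pos_of_mem_sphere : ∀ x ∈ Metric.sphere (0 : E) 1, 0 < ⟪(A + B q) x, x⟫ := by
    intro x hx
    refine (hq.re_inner_nonneg_left x).lt_of_ne' fun (hinner : ⟪_, _⟫ = 0) ↦ ?_
    rw [inner_apply_self_eq_zero_iff hq] at hinner
    rw [LinearMap.ker_eq_bot'.mp ((LinearMap.isUnit_iff_ker_eq_bot _).mp hunit) x hinner] at hx
    simp at hx
  have eventually_pos : ∀ᶠ q' in 𝓝 q, ∀ x ∈ Metric.sphere (0 : E) 1, 0 < ⟪(A + B q') x, x⟫ :=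
    (isCompact_sphere 0 1).eventually_forall_of_forall_eventually fun x hx ↦
      ((continuous_inner_add_apply_self A B).tendsto (q, x)).eventually_const_lt
        (pos_of_mem_sphere x hx)
  rw [mem_interior_iff_mem_nhds]
  filter_upwards [eventually_pos] with q' hq'
  refine ⟨hA.add (hB q'), fun x ↦ ?_⟩
  obtain rfl | hx := eq_or_ne x 0
  · simp
  have scaled := hq' (‖x‖⁻¹ • x) (by simpa using norm_smul_inv_norm (𝕜 := ℝ) hx)
  rw [map_smul, inner_smul_left, inner_smul_right, ← mul_assoc] at scaled
  exact (pos_of_mul_pos_right scaled (mul_self_nonneg _)).le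

theorem det_eq_zero_of_mem_frontier_spectrahedron (hA : A.IsSymmetric)
    (hB : ∀ q, (B q).IsSymmetric) {q : V} (hq : q ∈ frontier (spectrahedron A B)) :
    LinearMap.det (A + B q) = 0 := by
  by_contra hdet
  rw [(isClosed_spectrahedron hA hB).frontier_eq] at hq
  exact hq.2 <| mem_interior_spectrahedron hA hB hq.1 <|
    (LinearMap.isUnit_iff_isUnit_det _).mpr (isUnit_iff_ne_zero.mpr hdet)

end Spectrahedra

section SmoothCubics

theorem eval_smul_of_isHomogeneous {σ R : Type*} [CommSemiring R] {F : MvPolynomial σ R} {n : ℕ}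
    (hF : F.IsHomogeneous n) (c : R) (p : σ → R) : eval (c • p) F = c ^ n * eval p F := by
  rw [eval_eq, eval_eq, Finset.mul_sum]
  refine Finset.sum_congr rfl fun d hd ↦ ?_
  simp only [Pi.smul_apply, smul_eq_mul, mul_pow, Finset.prod_mul_distrib,
    Finset.prod_pow_eq_pow_sum]
  rw [← hF.degree_eq_sum_deg_support hd]
  ring

theorem not_dvd_of_irreducible_of_isHomogeneous {σ k : Type*} [Field k] {L F : MvPolynomial σ k}
    {i n : ℕ} (hL : L.IsHomogeneous i) (hF : F.IsHomogeneous n) (hirr : Irreducible F)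
    (hi : i ≠ 0) (hin : i < n) : ¬L ∣ F := by
  intro hdvd
  have hL0 : L ≠ 0 := ne_zero_of_dvd_ne_zero hirr.ne_zero hdvd
  obtain hunit | hassoc := hirr.dvd_iff.mp hdvd
  · rw [isUnit_iff_totalDegree_of_isReduced, hL.totalDegree hL0] at hunit
    exact hi hunit.2
  · have := totalDegree_le_of_dvd_of_isDomain hassoc.dvd hL0
    rw [hF.totalDegree hirr.ne_zero, hL.totalDegree hL0] at this
    exact hin.not_ge this

variable {m : ℕ} {F : MvPolynomial (Fin (m + 1)) ℝ}

theorem dvd_of_forall_eval_cons_one_eq_zero {n d : ℕ} (hF : F.IsHomogeneous n) (hn : Odd n)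
    (hn1 : 1 < n) (hirr : Irreducible F) {D : MvPolynomial (Fin (m + 1)) ℝ}
    (hD : D.IsHomogeneous d)
    (hFD : ∀ q : Fin m → ℝ, eval (Fin.cons 1 q) F = 0 → eval (Fin.cons 1 q) D = 0) : F ∣ D := by
  have F_dvd_mul : F ∣ X 0 * D := by
    refine dvd_of_forall_eval_eq_zero hF hn hirr fun p hp ↦ ?_
    rw [map_mul, eval_X]
    obtain h0 | h0 := eq_or_ne (p 0) 0
    · rw [h0, zero_mul]
    have p_eq : p = p 0 • (Fin.cons 1 ((p 0)⁻¹ • Fin.tail p) : Fin (m + 1) → ℝ) := by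
      refine funext (Fin.cases ?_ fun i ↦ ?_) <;> simp [Fin.tail, h0]
    rw [p_eq, eval_smul_of_isHomogeneous hF, mul_eq_zero, or_iff_right (pow_ne_zero n h0)] at hp
    rw [p_eq, eval_smul_of_isHomogeneous hD, hFD _ hp, mul_zero, mul_zero]
  refine (hirr.prime.dvd_or_dvd F_dvd_mul).resolve_left fun hdvd ↦ ?_
  have := totalDegree_le_of_dvd_of_isDomain hdvd (X_ne_zero 0)
  rw [hF.totalDegree hirr.ne_zero, totalDegree_X] at this
  exact hn1.not_ge this

variable {E : Type*} [NormedAddCommGroup E] [InnerProductSpace ℝ E]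
  {A : Module.End ℝ E} {B : (Fin m → ℝ) →ₗ[ℝ] Module.End ℝ E}

/-- The linear family `(w, q) ↦ w A + B q` whose restriction to `w = 1` is the affine family
`q ↦ A + B q`; the homogenizing variable is the first coordinate. -/
def homogenization (A : Module.End ℝ E) (B : (Fin m → ℝ) →ₗ[ℝ] Module.End ℝ E) :
    (Fin (m + 1) → ℝ) →ₗ[ℝ] Module.End ℝ E :=
  (LinearMap.proj 0).smulRight A + B ∘ₗ LinearMap.funLeft ℝ ℝ Fin.succ

theorem homogenization_cons_one (q : Fin m → ℝ) :
    homogenization A B (Fin.cons 1 q) = A + B q := by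
  have : LinearMap.funLeft ℝ ℝ Fin.succ (Fin.cons 1 q : Fin (m + 1) → ℝ) = q :=
    funext fun i ↦ by simp [LinearMap.funLeft_apply]
  simp [homogenization, this]

theorem isSymmetric_homogenization (hA : A.IsSymmetric) (hB : ∀ q, (B q).IsSymmetric)
    (p : Fin (m + 1) → ℝ) : (homogenization A B p).IsSymmetric :=
  (hA.smul (conj_trivial _)).add (hB _)

variable [FiniteDimensional ℝ E]

variable (A B) in
theorem exists_forall_eval_eq_det_add :
    ∃ g : MvPolynomial (Fin m) ℝ, ∀ q, eval q g = LinearMap.det (A + B q) := by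
  obtain ⟨D, -, hD⟩ := exists_isHomogeneous_forall_eval_eq_det (homogenization A B)
  refine ⟨aeval (Fin.cons 1 X) D, fun q ↦ ?_⟩
  have hom_eq : (eval q).comp (aeval (R := ℝ) (Fin.cons 1 X)).toRingHom =
      eval (Fin.cons 1 q : Fin (m + 1) → ℝ) := by
    ext i
    · simp
    · cases i using Fin.cases <;> simp
  rw [← homogenization_cons_one, ← hD]
  exact DFunLike.congr_fun hom_eq D

theorem hasSingularZero_of_forall_eval_cons_one (hm : 3 ≤ m) (hE : Module.finrank ℝ E = 4)
    (hA : A.IsSymmetric) (hB : ∀ q, (B q).IsSymmetric) (hF : F.IsHomogeneous 3)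
    (hirr : Irreducible F) {q₀ : Fin m → ℝ} (hq₀ : q₀ ∈ spectrahedron A B)
    (hunit : IsUnit (A + B q₀))
    (hdet : ∀ q : Fin m → ℝ, eval (Fin.cons 1 q) F = 0 → LinearMap.det (A + B q) = 0) :
    HasSingularZero ℂ F := by
  obtain ⟨D, hDhom, hD⟩ := exists_isHomogeneous_forall_eval_eq_det (homogenization A B)
  obtain ⟨L, rfl⟩ : F ∣ D := dvd_of_forall_eval_cons_one_eq_zero hF (by decide) (by decide) hirr
    hDhom fun q hq ↦ by rw [hD, homogenization_cons_one, hdet q hq]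
  have hne : F * L ≠ 0 := by
    intro h0
    refine ((LinearMap.isUnit_iff_isUnit_det _).mp hunit).ne_zero ?_
    rw [← homogenization_cons_one, ← hD, h0, map_zero]
  have hL : L.IsHomogeneous 1 := by
    obtain ⟨i, j, hij, hFi, hLj⟩ := exists_isHomogeneous_of_mul hDhom hne
    obtain rfl := hFi.inj_right hF hirr.ne_zero
    obtain rfl : j = 1 := by lia
    exact hLj
  refine hasSingularZero_of_isPositive (T := homogenization A B) (e := Fin.cons 1 q₀)
    (by rw [Fintype.card_fin]; lia) hE (isSymmetric_homogenization hA hB)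
    (by rwa [homogenization_cons_one]) (by rwa [homogenization_cons_one]) hL
    (not_dvd_of_irreducible_of_isHomogeneous hL hF hirr one_ne_zero (by decide)) fun p ↦ ?_
  rw [← hD, mul_comm]

theorem hasSingularZero_of_forall_frontier (hm : 3 ≤ m) (hE : Module.finrank ℝ E = 4)
    (hA : A.IsSymmetric) (hB : ∀ q, (B q).IsSymmetric)
    (hint : (interior (spectrahedron A B)).Nonempty) (hF : F.IsHomogeneous 3)
    (hirr : Irreducible F)
    (hbd : ∀ p : Fin m → ℝ, eval (Fin.cons 1 p) F = 0 →
      ∀ g : MvPolynomial (Fin m) ℝ, (∀ q ∈ frontier (spectrahedron A B), eval q g = 0) →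
        eval p g = 0) : HasSingularZero ℂ F := by
  obtain ⟨A', hA', spectrahedron_eq, q₀, hq₀, hunit⟩ :=
    exists_spectrahedron_eq_and_isUnit hA hB hint
  obtain ⟨g, hg⟩ := exists_forall_eval_eq_det_add A' B
  refine hasSingularZero_of_forall_eval_cons_one hm hE hA' hB hF hirr hq₀ hunit fun p hp ↦ ?_
  rw [← hg]
  refine hbd p hp g fun q hq ↦ ?_
  rw [hg]
  exact det_eq_zero_of_mem_frontier_spectrahedron hA' hB (spectrahedron_eq ▸ hq)

end SmoothCubics

theorem stmt_15_general {m : ℕ} (hm : 3 ≤ m) (C : Set (Fin m → ℝ)) (hint : (interior C).Nonempty)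
    (F : MvPolynomial (Fin (m + 1)) ℝ) (hFhom : F.IsHomogeneous 3)
    (hbd : ∀ p : Fin m → ℝ, eval (Fin.cons 1 p) F = 0 →
      ∀ g : MvPolynomial (Fin m) ℝ, (∀ q ∈ frontier C, eval q g = 0) → eval p g = 0)
    (hsmooth : ¬HasSingularZero ℂ F) :
    ¬∃ A : Fin (m + 1) → Matrix (Fin 4) (Fin 4) ℝ, (∀ k, (A k).IsSymm) ∧
      ∀ p : Fin m → ℝ, p ∈ C ↔ (A 0 + ∑ i, p i • A i.succ).PosSemidef := by
  rintro ⟨A, hA, hC⟩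
  let T (k : Fin (m + 1)) : Module.End ℝ (EuclideanSpace ℝ (Fin 4)) := (A k).toEuclideanLin
  have hT (k : Fin (m + 1)) : (T k).IsSymmetric :=
    Matrix.isSymmetric_toEuclideanLin_iff.mpr <| by
      rw [Matrix.IsHermitian, Matrix.conjTranspose_eq_transpose_of_trivial, hA k]
  have C_eq : C = spectrahedron (T 0) (Fintype.linearCombination ℝ fun i ↦ T i.succ) := by
    ext p
    rw [hC, ← Matrix.isPositive_toEuclideanLin_iff]
    simp [spectrahedron, T, Fintype.linearCombination_apply]
  subst C_eq
  refine hsmooth (hasSingularZero_of_forall_frontier hm finrank_euclideanSpace_fin (hT 0)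
    (fun q ↦ ?_) hint hFhom (irreducible_of_not_hasSingularZero ?_ hFhom three_ne_zero hsmooth) hbd)
  · rw [Fintype.linearCombination_apply]
    exact LinearMap.isSymmetric_sum _ fun i _ ↦ (hT i.succ).smul (conj_trivial _)
  · rw [Fintype.card_fin]
    lia

/-- a convex region in `ℝ³` whose algebraic boundary is a smooth
cubic surface admits no spectrahedral representation by `4×4` matrices. -/
theorem stmt_15 (C : Set (Fin 3 → ℝ)) (hconv : Convex ℝ C)
    (hint : (interior C).Nonempty)
    (f : MvPolynomial (Fin 3) ℝ) (hdeg : f.totalDegree = 3)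
    -- the zero set of `f` is the Zariski closure of the Euclidean boundary of `C`:
    (hbd : ∀ p : Fin 3 → ℝ, eval p f = 0 ↔
      ∀ g : MvPolynomial (Fin 3) ℝ, (∀ q ∈ frontier C, eval q g = 0) → eval p g = 0)
    (F : MvPolynomial (Fin 4) ℝ) (hFhom : F.IsHomogeneous 3)
    (hFdehom : ∀ x y z : ℝ, eval ![(1 : ℝ), x, y, z] F = eval ![x, y, z] f)
    -- the projective surface `{F = 0} ⊆ ℙ³(ℂ)` is smooth:
    (hsmooth : ¬ ∃ p : Fin 4 → ℂ, p ≠ 0 ∧ aeval p F = 0 ∧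
      ∀ i, aeval p (pderiv i F) = 0) :
    ¬ ∃ A : Fin 4 → Matrix (Fin 4) (Fin 4) ℝ, (∀ k, (A k).IsSymm) ∧
      ∀ p : Fin 3 → ℝ,
        p ∈ C ↔ (A 0 + ∑ i : Fin 3, p i • A i.succ).PosSemidef := by
  have cons_eq (p : Fin 3 → ℝ) : (Fin.cons 1 p : Fin 4 → ℝ) = ![1, p 0, p 1, p 2] := by
    ext i; fin_cases i <;> rfl
  have vec_eq (p : Fin 3 → ℝ) : ![p 0, p 1, p 2] = p := by ext i; fin_cases i <;> rfl
  refine stmt_15_general le_rfl C hint F hFhom (fun p hp ↦ (hbd p).mp ?_) hsmooth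
  rwa [cons_eq, hFdehom, vec_eq] at hp
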